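/- Let σ₁, σ₂ be switching signals of length t+1 with σ₁ ⪯ σ₂ and suppose W_{σ₁}(t) and W_{σ₂}(t) are positive definite. Then W_{σ₂}(t)⁻¹ ⪯ W_{σ₁}(t)⁻¹ in the Loewner order, and consequently for every x_f ∈ ℝⁿ the minimum input energy needed to reach x_f satisfies x_fᵀ W_{σ₂}(t)⁻¹ x_f ≤ x_fᵀ W_{σ₁}(t)⁻¹ x_f. -/

import Mathlib

open Matrix

/-- The controllability Gramian `W_σ(t) = Σ_{i=0}^{t} σ(i) A^{t-i} B Bᵀ (Aᵀ)^{t-i}`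
of the pair `(A, B)` under the switching signal `σ`. -/
def gramian {n m t : ℕ} (A : Matrix (Fin n) (Fin n) ℝ) (B : Matrix (Fin n) (Fin m) ℝ)
    (σ : Fin (t + 1) → ℝ) : Matrix (Fin n) (Fin n) ℝ :=
  ∑ i : Fin (t + 1), σ i • (A ^ (t - (i : ℕ)) * B * Bᵀ * (Aᵀ) ^ (t - (i : ℕ)))

/-!
The block matrix `[Q 1; 1 P⁻¹]` has Schur complements `Q - P` (of `P⁻¹`) and `P⁻¹ - Q⁻¹` (of `Q`).
For positive definite `P` and `Q` either one is positive semidefinite exactly when the block matrix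
is, so inversion reverses the Loewner order. The Gramian is linear in the switching signal, with
positive semidefinite coefficients `(A ^ k * B) * (A ^ k * B)ᵀ`, hence monotone.
-/

section LoewnerOrder

variable {ι R : Type*} [Fintype ι]

lemma dotProduct_mulVec_le_of_posSemidef_sub [Ring R] [PartialOrder R] [StarRing R] [AddRightMono R]
    {M N : Matrix ι ι R} (h : (N - M).PosSemidef) (x : ι → R) :
    star x ⬝ᵥ (M *ᵥ x) ≤ star x ⬝ᵥ (N *ᵥ x) := by
  have hx : 0 ≤ star x ⬝ᵥ ((N - M) *ᵥ x) := h.dotProduct_mulVec_nonneg x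
  rwa [sub_mulVec, dotProduct_sub, sub_nonneg] at hx

variable [DecidableEq ι] [Field R] [PartialOrder R] [StarRing R] [StarOrderedRing R]
  {P Q : Matrix ι ι R}

lemma posSemidef_inv_sub_inv_iff (hP : P.PosDef) (hQ : Q.PosDef) :
    (P⁻¹ - Q⁻¹).PosSemidef ↔ (Q - P).PosSemidef := by
  let _ := hP.isUnit.invertible
  let _ := hQ.isUnit.invertible
  calc (P⁻¹ - Q⁻¹).PosSemidef
      ↔ (fromBlocks Q 1 1ᴴ P⁻¹).PosSemidef := by
        simpa using (hQ.fromBlocks₁₁ 1 P⁻¹).symm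
    _ ↔ (Q - P).PosSemidef := by
        simpa using hP.inv.fromBlocks₂₂ Q 1

lemma posSemidef_inv_sub_inv (hP : P.PosDef) (hPQ : (Q - P).PosSemidef) :
    (P⁻¹ - Q⁻¹).PosSemidef := by
  have hQ : Q.PosDef := add_sub_cancel P Q ▸ hP.add_posSemidef hPQ
  exact (posSemidef_inv_sub_inv_iff hP hQ).2 hPQ

end LoewnerOrder

section Gramian

variable {n m t : ℕ} (A : Matrix (Fin n) (Fin n) ℝ) (B : Matrix (Fin n) (Fin m) ℝ)

lemma gramian_sub (σ₁ σ₂ : Fin (t + 1) → ℝ) :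
    gramian A B (σ₁ - σ₂) = gramian A B σ₁ - gramian A B σ₂ := by
  simp only [gramian, Pi.sub_apply, sub_smul, Finset.sum_sub_distrib]

variable {σ σ₁ σ₂ : Fin (t + 1) → ℝ}

lemma posSemidef_gramian (hσ : 0 ≤ σ) : (gramian A B σ).PosSemidef := by
  refine posSemidef_sum _ fun i _ ↦ PosSemidef.smul ?_ (hσ i)
  simpa [transpose_mul, transpose_pow, Matrix.mul_assoc] using
    posSemidef_self_mul_conjTranspose (A ^ (t - (i : ℕ)) * B)

lemma posSemidef_gramian_sub_gramian (hle : σ₁ ≤ σ₂) :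
    (gramian A B σ₂ - gramian A B σ₁).PosSemidef :=
  gramian_sub A B σ₂ σ₁ ▸ posSemidef_gramian A B (sub_nonneg.2 hle)

theorem gramian_inv_antitone_general (hle : σ₁ ≤ σ₂) (hW₁ : (gramian A B σ₁).PosDef) :
    ((gramian A B σ₁)⁻¹ - (gramian A B σ₂)⁻¹).PosSemidef ∧
      ∀ xf : Fin n → ℝ,
        xf ⬝ᵥ ((gramian A B σ₂)⁻¹ *ᵥ xf) ≤ xf ⬝ᵥ ((gramian A B σ₁)⁻¹ *ᵥ xf) := by
  have hinv : ((gramian A B σ₁)⁻¹ - (gramian A B σ₂)⁻¹).PosSemidef :=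
    posSemidef_inv_sub_inv hW₁ (posSemidef_gramian_sub_gramian A B hle)
  exact ⟨hinv, dotProduct_mulVec_le_of_posSemidef_sub hinv⟩

end Gramian

/-- If `σ₁ ⪯ σ₂` and the Gramians `W_{σ₁}(t)`, `W_{σ₂}(t)` are positive definite, then
`W_{σ₂}(t)⁻¹ ⪯ W_{σ₁}(t)⁻¹` in the Loewner order; consequently, for every `x_f` the minimum
input energy required to reach `x_f` satisfies
`x_fᵀ W_{σ₂}(t)⁻¹ x_f ≤ x_fᵀ W_{σ₁}(t)⁻¹ x_f`. -/
theorem gramian_inv_antitone {n m t : ℕ}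
    (A : Matrix (Fin n) (Fin n) ℝ) (B : Matrix (Fin n) (Fin m) ℝ)
    (σ₁ σ₂ : Fin (t + 1) → ℝ)
    (hσ₁ : ∀ i, σ₁ i = 0 ∨ σ₁ i = 1) (hσ₂ : ∀ i, σ₂ i = 0 ∨ σ₂ i = 1)
    (hle : ∀ i, σ₁ i ≤ σ₂ i)
    (hW₁ : (gramian A B σ₁).PosDef) (hW₂ : (gramian A B σ₂).PosDef) :
    ((gramian A B σ₁)⁻¹ - (gramian A B σ₂)⁻¹).PosSemidef ∧
      ∀ xf : Fin n → ℝ,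
        xf ⬝ᵥ ((gramian A B σ₂)⁻¹ *ᵥ xf) ≤ xf ⬝ᵥ ((gramian A B σ₁)⁻¹ *ᵥ xf) :=
  gramian_inv_antitone_general A B hle hW₁
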